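/- Let w(x) = (x·log(1/x))^{−3/2}, c(x) = x·log(1/x), d ∈ ℝ, T ∈ (0,1/4], and u(t,x) = c(x)·(sin(t·w(x)) + d) for x ∈ (0,1/2). Then for every p ∈ [1,∞) and every q ∈ (2,∞): ∫₀ᵀ ( ∫₀^{T−h} ( ∫₀^{1/2} |u(t+h,x) − u(t,x)|² w(x) dx )^{p/2} dt )^{q/p} h^{−1−q/2} dh < ∞; that is, the function t ↦ u(t,·) belongs to the homogeneous Besov space B^{1/2,p}_q([0,T]; L²((0,1/2), w dx)). -/

import Mathlib

open MeasureTheory Set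

/-!
Write `c x = x log (1/x)` and `w = c ^ (-3/2)`. An increment of `t ↦ c x * φ (t * w x)` over a step
`h` has squared weighted norm `∫ c ^ (1/2) * (φ ((t + h) * w x) - φ (t * w x)) ^ 2 dx`. Split this
integral at a radius `y`: below `y` use that `φ` is bounded, above `y` that it is Lipschitz. Since
`c` is comparable to `x` up to a slowly varying factor, the two parts are at most multiples of
`y * c y ^ (1/2)` and `y * h ^ 2 * c y ^ (-5/2)`. They balance when `c y` is of order `h ^ (2/3)`,
that is for `y = h ^ (2/3) / log (1/h)`, and both are then of order `h / log (1/h)`. The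
logarithmic gain over the scaling bound `h` leaves `∫ log (1/h) ^ (-q/2) dh / h`, which converges
at `0` exactly when `q > 2`.
-/

section LogarithmicProfile

open Real

lemma neg_log_le_rpow_mul {ε x y : ℝ} (hε : 0 < ε) (hy : 0 < y) (hyx : y ≤ x) (hx : x ≤ 1) :
    -log y ≤ (x / y) ^ ε * (ε⁻¹ - log x) := by
  have hx0 : 0 < x := hy.trans_le hyx
  have one_le_pow : 1 ≤ (x / y) ^ ε := one_le_rpow ((one_le_div hy).2 hyx) hε.le
  calc -log y = log (x / y) + -log x := by rw [log_div hx0.ne' hy.ne']; ring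
    _ ≤ (x / y) ^ ε / ε + (x / y) ^ ε * -log x :=
        add_le_add (log_le_rpow_div (by positivity) hε)
          (le_mul_of_one_le_left (neg_nonneg.2 (log_nonpos hx0.le hx)) one_le_pow)
    _ = (x / y) ^ ε * (ε⁻¹ - log x) := by ring

lemma log_two_le_neg_log {x : ℝ} (hx0 : 0 < x) (hx : x ≤ 1 / 2) : log 2 ≤ -log x := by
  rw [← log_inv]
  exact log_le_log two_pos ((le_inv_comm₀ two_pos hx0).2 (by linarith))

lemma neg_log_le_four_mul_rpow_mul {ε x y : ℝ} (hε : 1 / 2 ≤ ε) (hy : 0 < y) (hyx : y ≤ x)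
    (hx : x ≤ 1 / 2) : -log y ≤ 4 * (x / y) ^ ε * -log x := by
  have hx0 : 0 < x := hy.trans_le hyx
  have inv_le : ε⁻¹ ≤ 2 := inv_le_of_inv_le₀ two_pos (by linarith)
  have log_ge : 2 / 3 ≤ -log x :=
    le_trans (by linarith [log_two_gt_d9]) (log_two_le_neg_log hx0 hx)
  calc -log y ≤ (x / y) ^ ε * (ε⁻¹ - log x) :=
        neg_log_le_rpow_mul (by linarith) hy hyx (by linarith)
    _ ≤ (x / y) ^ ε * (4 * -log x) := by gcongr; linarith
    _ = 4 * (x / y) ^ ε * -log x := by ring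

lemma negMulLog_pos {x : ℝ} (hx : x ∈ Ioo 0 1) : 0 < negMulLog x :=
  mul_pos_of_neg_of_neg (neg_neg_of_pos hx.1) (log_neg hx.1 hx.2)

lemma mul_log_one_div (x : ℝ) : x * log (1 / x) = negMulLog x := by
  rw [one_div, log_inv, negMulLog]; ring

lemma rpow_div_mul_negMulLog_le {θ x y : ℝ} (hθ : θ ≤ 1 / 2) (hy : 0 < y) (hyx : y ≤ x)
    (hx : x ≤ 1 / 2) : (x / y) ^ θ * negMulLog y ≤ 4 * negMulLog x := by
  have hx0 : 0 < x := hy.trans_le hyx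
  have pow_mul_pow : (x / y) ^ θ * (x / y) ^ (1 - θ) = x / y := by
    rw [← rpow_add (by positivity), add_sub_cancel, rpow_one]
  calc (x / y) ^ θ * negMulLog y = (x / y) ^ θ * y * -log y := by rw [negMulLog]; ring
    _ ≤ (x / y) ^ θ * y * (4 * (x / y) ^ (1 - θ) * -log x) := by
        gcongr
        exact neg_log_le_four_mul_rpow_mul (by linarith) hy hyx hx
    _ = 4 * y * ((x / y) ^ θ * (x / y) ^ (1 - θ)) * -log x := by ring
    _ = 4 * negMulLog x := by rw [pow_mul_pow, negMulLog]; field_simp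

lemma negMulLog_rpow_neg_le {r x y : ℝ} (hr : 0 ≤ r) (hy : 0 < y) (hyx : y ≤ x)
    (hx : x ≤ 1 / 2) :
    negMulLog x ^ (-r) ≤ 4 ^ r * negMulLog y ^ (-r) * (x / y) ^ (-(r / 2)) := by
  have hx0 : 0 < x := hy.trans_le hyx
  have hc : 0 < negMulLog y := negMulLog_pos ⟨hy, by linarith⟩
  have hle : 4⁻¹ * negMulLog y * (x / y) ^ (1 / 2 : ℝ) ≤ negMulLog x := by
    linarith [rpow_div_mul_negMulLog_le le_rfl hy hyx hx]
  calc negMulLog x ^ (-r) ≤ (4⁻¹ * negMulLog y * (x / y) ^ (1 / 2 : ℝ)) ^ (-r) :=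
        rpow_le_rpow_of_nonpos (by positivity) hle (neg_nonpos.2 hr)
    _ = 4 ^ r * negMulLog y ^ (-r) * (x / y) ^ (-(r / 2)) := by
        rw [mul_rpow (by positivity) (by positivity), mul_rpow (by positivity) hc.le,
          ← rpow_mul (by positivity), inv_rpow four_pos.le, ← rpow_neg four_pos.le, neg_neg]
        congr 2
        ring

lemma negMulLog_rpow_div_neg_log (a : ℝ) {h : ℝ} (hh : 0 < h) (hL : 0 < -log h) :
    negMulLog (h ^ a / -log h) = h ^ a * (a + log (-log h) / -log h) := by
  rw [negMulLog, log_div (by positivity) hL.ne', log_rpow hh]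
  have : log h ≠ 0 := by linarith
  field_simp
  ring

lemma negMulLog_rpow_div_neg_log_mem_Icc (a : ℝ) {h : ℝ} (hh : 0 < h) (hL : 1 ≤ -log h) :
    negMulLog (h ^ a / -log h) ∈ Icc (a * h ^ a) ((a + 1) * h ^ a) := by
  have hL0 : 0 < -log h := by linarith
  have quot_nonneg : 0 ≤ log (-log h) / -log h := div_nonneg (log_nonneg hL) hL0.le
  have quot_le_one : log (-log h) / -log h ≤ 1 := (div_le_one hL0).2 (log_le_self hL0.le)
  rw [negMulLog_rpow_div_neg_log a hh hL0, mul_comm (h ^ a)]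
  exact ⟨by gcongr; linarith, by gcongr⟩

lemma one_le_neg_log {h : ℝ} (hh : h ∈ Ioc 0 (1 / 4)) : 1 ≤ -log h := by
  have : -log h = -log (4 * h) + 2 * log 2 := by
    rw [log_mul four_ne_zero hh.1.ne', show (4 : ℝ) = 2 ^ 2 by norm_num, log_pow]
    push_cast; ring
  have : log (4 * h) ≤ 0 := log_nonpos (by linarith [hh.1]) (by linarith [hh.2])
  linarith [log_two_gt_d9]

lemma integrableOn_inv_mul_neg_log_rpow {a r : ℝ} (ha : a < 1) (hr : 1 < r) :
    IntegrableOn (fun h : ℝ => h⁻¹ * (-log h) ^ (-r)) (Ioc 0 a) := by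
  rcases le_or_gt a 0 with ha0 | ha0
  · simp [Ioc_eq_empty_of_le ha0]
  obtain ⟨σ, hσ, hσa⟩ : ∃ σ, 0 < σ ∧ σ < -log a := exists_between (neg_pos.2 (log_neg ha0 ha))
  -- Substituting `h = exp (-s)` turns the integrand into `s ^ (-r)`.
  have subset_image : Ioc 0 a ⊆ (fun s => exp (-s)) '' Ioi σ := fun h hh =>
    ⟨-log h, hσa.trans_le (neg_le_neg (log_le_log hh.1 hh.2)), by simp [exp_log hh.1]⟩
  refine IntegrableOn.mono_set ?_ subset_image
  have hderiv : ∀ s ∈ Ioi σ, HasDerivWithinAt (fun s => exp (-s)) (-exp (-s)) (Ioi σ) s :=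
    fun s _ => by simpa using (hasDerivAt_neg s).exp.hasDerivWithinAt
  have hinj : InjOn (fun s : ℝ => exp (-s)) (Ioi σ) :=
    (exp_injective.comp neg_injective).injOn
  rw [integrableOn_image_iff_integrableOn_abs_deriv_smul measurableSet_Ioi hderiv hinj]
  refine (integrableOn_Ioi_rpow_of_lt (neg_lt_neg hr) hσ).congr_fun (fun s _ => ?_)
    measurableSet_Ioi
  simp [(exp_pos _).ne']

end LogarithmicProfile

section Integration

lemma integrableOn_Ioi_div_rpow {a y : ℝ} (ha : a < -1) (hy : 0 < y) :
    IntegrableOn (fun x => (x / y) ^ a) (Ioi y) := by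
  simp only [div_eq_mul_inv]
  rw [integrableOn_Ioi_comp_mul_right_iff (fun x => x ^ a) y (inv_pos.2 hy),
    mul_inv_cancel₀ hy.ne']
  exact integrableOn_Ioi_rpow_of_lt ha one_pos

lemma integral_Ioi_div_rpow {a y : ℝ} (ha : a < -1) (hy : 0 < y) :
    ∫ x in Ioi y, (x / y) ^ a = -y / (a + 1) := by
  simp only [div_eq_mul_inv _ y]
  rw [integral_comp_mul_right_Ioi (fun x => x ^ a) y (inv_pos.2 hy), mul_inv_cancel₀ hy.ne',
    integral_Ioi_rpow_of_lt ha one_pos, Real.one_rpow, inv_inv, smul_eq_mul]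
  ring

lemma measurable_setIntegral_Ioo {α : Type*} [MeasurableSpace α] {F : ℝ → α → ℝ} {a b : α → ℝ}
    (hF : Measurable (Function.uncurry F)) (ha : Measurable a) (hb : Measurable b) :
    Measurable fun z => ∫ t in Ioo (a z) (b z), F t z := by
  have hset : MeasurableSet {v : α × ℝ | v.2 ∈ Ioo (a v.1) (b v.1)} :=
    (measurableSet_lt (ha.comp measurable_fst) measurable_snd).inter
      (measurableSet_lt measurable_snd (hb.comp measurable_fst))
  have hind := ((hF.comp measurable_swap).indicator hset).stronglyMeasurable
  convert (hind.integral_prod_right' (ν := volume)).measurable using 2 with z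
  rw [← integral_indicator measurableSet_Ioo]
  rfl

lemma rpow_setIntegral_rpow_le {α : Type*} [MeasurableSpace α] {μ : Measure α} {S : Set α}
    {F : α → ℝ} {G p q : ℝ} (hS : μ S ≠ ⊤) (hp : 0 < p) (hq : 0 ≤ q) (hF0 : ∀ t, 0 ≤ F t)
    (hFG : ∀ t, F t ≤ G) (hG : 0 ≤ G) :
    (∫ t in S, F t ^ (p / 2) ∂μ) ^ (q / p) ≤ μ.real S ^ (q / p) * G ^ (q / 2) := by
  have hpow0 : ∀ t, 0 ≤ F t ^ (p / 2) := fun t => Real.rpow_nonneg (hF0 t) _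
  have integral_le : ∫ t in S, F t ^ (p / 2) ∂μ ≤ μ.real S * G ^ (p / 2) := by
    calc ∫ t in S, F t ^ (p / 2) ∂μ ≤ ∫ _ in S, G ^ (p / 2) ∂μ :=
          integral_mono_of_nonneg (ae_of_all _ hpow0) (integrableOn_const hS)
            (ae_of_all _ fun t => Real.rpow_le_rpow (hF0 t) (hFG t) (by positivity))
      _ = μ.real S * G ^ (p / 2) := by rw [setIntegral_const, smul_eq_mul]
  calc (∫ t in S, F t ^ (p / 2) ∂μ) ^ (q / p) ≤ (μ.real S * G ^ (p / 2)) ^ (q / p) :=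
        Real.rpow_le_rpow (integral_nonneg hpow0) integral_le (by positivity)
    _ = μ.real S ^ (q / p) * G ^ (q / 2) := by
        rw [Real.mul_rpow measureReal_nonneg (by positivity), ← Real.rpow_mul hG]
        congr 2
        field_simp

end Integration

section BesovIntegrand

/-- The integrand in `h` of the `q`-th power of the seminorm of `B^{s,p}_q((0,T))`, in terms of the
squared norms `E t h = ‖f (t + h) - f t‖ ^ 2` of the increments of `f`. -/
noncomputable def besovIntegrand (E : ℝ → ℝ → ℝ) (T s p q h : ℝ) : ℝ :=
  (∫ t in Ioo 0 (T - h), E t h ^ (p / 2)) ^ (q / p) * h ^ (-1 - q * s)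

variable {E : ℝ → ℝ → ℝ} {T s p q : ℝ}

lemma measurable_besovIntegrand (hE : Measurable (Function.uncurry E)) :
    Measurable (besovIntegrand E T s p q) :=
  ((measurable_setIntegral_Ioo (hE.pow_const (p / 2)) measurable_const
    (measurable_const.sub measurable_id)).pow_const _).mul (measurable_id.pow_const _)

lemma besovIntegrand_nonneg (hE0 : ∀ t h, 0 ≤ E t h) {h : ℝ} (hh : 0 < h) :
    0 ≤ besovIntegrand E T s p q h :=
  mul_nonneg (Real.rpow_nonneg (integral_nonneg fun t => Real.rpow_nonneg (hE0 t h) _) _)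
    (Real.rpow_nonneg hh.le _)

lemma besovIntegrand_le (hp : 0 < p) (hq : 0 ≤ q) (hE0 : ∀ t h, 0 ≤ E t h) {G h : ℝ} (hh : 0 < h)
    (hEG : ∀ t, E t h ≤ G) :
    besovIntegrand E T s p q h ≤ |T| ^ (q / p) * (G ^ (q / 2) * h ^ (-1 - q * s)) := by
  have hG : 0 ≤ G := (hE0 0 h).trans (hEG 0)
  have length_le : volume.real (Ioo 0 (T - h)) ≤ |T| := by
    rw [Real.volume_real_Ioo]
    exact max_le (by linarith [le_abs_self T]) (abs_nonneg T)
  rw [besovIntegrand, ← mul_assoc]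
  gcongr
  calc (∫ t in Ioo 0 (T - h), E t h ^ (p / 2)) ^ (q / p)
      ≤ volume.real (Ioo 0 (T - h)) ^ (q / p) * G ^ (q / 2) :=
        rpow_setIntegral_rpow_le measure_Ioo_lt_top.ne hp hq (hE0 · h) hEG hG
    _ ≤ |T| ^ (q / p) * G ^ (q / 2) := by gcongr

lemma integrableOn_besovIntegrand_of_modulus {ω : ℝ → ℝ} {S : Set ℝ} (hS : MeasurableSet S)
    (hS0 : S ⊆ Ioi 0) (hp : 0 < p) (hq : 0 ≤ q) (hE : Measurable (Function.uncurry E))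
    (hE0 : ∀ t h, 0 ≤ E t h) (hEω : ∀ h ∈ S, ∀ t, E t h ≤ ω h)
    (hω : IntegrableOn (fun h => ω h ^ (q / 2) * h ^ (-1 - q * s)) S) :
    IntegrableOn (besovIntegrand E T s p q) S := by
  refine (hω.const_mul (|T| ^ (q / p))).mono' (measurable_besovIntegrand hE).aestronglyMeasurable ?_
  filter_upwards [ae_restrict_mem hS] with h hh
  rw [Real.norm_of_nonneg (besovIntegrand_nonneg hE0 (hS0 hh))]
  exact besovIntegrand_le hp hq hE0 (hS0 hh) (hEω h hh)

lemma integrableOn_besovIntegrand_of_log_gain {A B h₀ : ℝ} (hs : 0 < s) (hp : 0 < p) (hq : 2 < q)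
    (hh₀ : h₀ ∈ Ioo 0 1) (hE : Measurable (Function.uncurry E)) (hE0 : ∀ t h, 0 ≤ E t h)
    (hA : 0 ≤ A) (hEA : ∀ h ∈ Ioc 0 h₀, ∀ t, E t h ≤ A * (h ^ (2 * s) / -Real.log h))
    (hEB : ∀ t h, E t h ≤ B) :
    IntegrableOn (besovIntegrand E T s p q) (Ioi 0) := by
  rw [← Ioc_union_Ioi_eq_Ioi hh₀.1.le]
  refine IntegrableOn.union ?small_steps ?large_steps
  case small_steps =>
    refine integrableOn_besovIntegrand_of_modulus measurableSet_Ioc (fun _ h => h.1) hp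
      (by linarith) hE hE0 hEA ?_
    refine IntegrableOn.congr_fun
      ((integrableOn_inv_mul_neg_log_rpow hh₀.2 (by linarith : 1 < q / 2)).const_mul (A ^ (q / 2)))
      (fun h hh => ?_) measurableSet_Ioc
    have hL : 0 < -Real.log h := neg_pos.2 (Real.log_neg hh.1 (hh.2.trans_lt hh₀.2))
    have inv_eq : h⁻¹ = h ^ (2 * s * (q / 2)) * h ^ (-1 - q * s) := by
      rw [← Real.rpow_add hh.1, ← Real.rpow_neg_one]
      congr 1
      ring
    rw [Real.mul_rpow hA (div_nonneg (Real.rpow_nonneg hh.1.le _) hL.le),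
      Real.div_rpow (Real.rpow_nonneg hh.1.le _) hL.le, ← Real.rpow_mul hh.1.le,
      Real.rpow_neg hL.le, inv_eq]
    ring
  case large_steps =>
    refine integrableOn_besovIntegrand_of_modulus measurableSet_Ioi (Ioi_subset_Ioi hh₀.1.le) hp
      (by linarith) hE hE0 (fun h _ t => hEB t h) (Integrable.const_mul ?_ _)
    exact integrableOn_Ioi_rpow_of_lt (by nlinarith) hh₀.1

end BesovIntegrand

section CriticalOscillation

open Real
open scoped NNReal

/-- The weight `w x = (x log (1/x)) ^ (-3/2)` of the space `L²((0,1/2), w dx)`. -/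
noncomputable def criticalWeight (x : ℝ) : ℝ := negMulLog x ^ (-(3 / 2) : ℝ)

/-- The critical function `u(t,x) = c x * φ (t * w x)`, with `c x = x log (1/x)`, for a profile `φ`
generalizing `φ r = sin r + d`. -/
noncomputable def criticalOscillation (φ : ℝ → ℝ) (t x : ℝ) : ℝ :=
  negMulLog x * φ (t * criticalWeight x)

/-- The density in `x` of the squared `L²((0,1/2), w dx)` norm of `u(t+h,·) - u(t,·)`. -/
noncomputable def incrementDensity (φ : ℝ → ℝ) (t h x : ℝ) : ℝ :=
  |criticalOscillation φ (t + h) x - criticalOscillation φ t x| ^ 2 * criticalWeight x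

/-- The squared `L²((0,1/2), w dx)` norm of the increment `u(t+h,·) - u(t,·)`. -/
noncomputable def incrementEnergy (φ : ℝ → ℝ) (t h : ℝ) : ℝ :=
  ∫ x in Ioo 0 (1 / 2), incrementDensity φ t h x

variable {φ : ℝ → ℝ} {K : ℝ≥0} {M : ℝ}

lemma incrementDensity_eq (φ : ℝ → ℝ) (t h : ℝ) {x : ℝ} (hx : x ∈ Ioo 0 1) :
    incrementDensity φ t h x = negMulLog x ^ (1 / 2 : ℝ) *
      |φ ((t + h) * criticalWeight x) - φ (t * criticalWeight x)| ^ 2 := by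
  have hc : 0 < negMulLog x := negMulLog_pos hx
  have sqrt_eq : negMulLog x ^ (1 / 2 : ℝ) = negMulLog x ^ 2 * criticalWeight x := by
    rw [criticalWeight, ← rpow_natCast, ← rpow_add hc]; norm_num
  rw [incrementDensity, criticalOscillation, criticalOscillation, ← mul_sub, abs_mul, mul_pow,
    sq_abs (negMulLog x), sqrt_eq]
  ring

lemma incrementDensity_nonneg (φ : ℝ → ℝ) (t h : ℝ) {x : ℝ} (hx : x ∈ Ioo 0 1) :
    0 ≤ incrementDensity φ t h x :=
  mul_nonneg (sq_nonneg _) (rpow_nonneg (negMulLog_pos hx).le _)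

lemma incrementEnergy_nonneg (φ : ℝ → ℝ) (t h : ℝ) : 0 ≤ incrementEnergy φ t h :=
  setIntegral_nonneg measurableSet_Ioo fun _ hx =>
    incrementDensity_nonneg φ t h ⟨hx.1, hx.2.trans one_half_lt_one⟩

lemma measurable_incrementDensity (hφ : Measurable φ) :
    Measurable fun z : (ℝ × ℝ) × ℝ => incrementDensity φ z.1.1 z.1.2 z.2 := by
  unfold incrementDensity criticalOscillation criticalWeight
  fun_prop

lemma measurable_incrementEnergy (hφ : Measurable φ) :
    Measurable (Function.uncurry (incrementEnergy φ)) :=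
  ((measurable_incrementDensity hφ).stronglyMeasurable.integral_prod_right'
    (ν := volume.restrict (Ioo 0 (1 / 2)))).measurable

lemma incrementDensity_le_of_bounded (hM : ∀ a b, |φ a - φ b| ≤ M) (t h : ℝ) {x y : ℝ}
    (hx : x ∈ Ioc 0 y) (hy : y ≤ 1 / 2) :
    incrementDensity φ t h x ≤ 2 * M ^ 2 * negMulLog y ^ (1 / 2 : ℝ) := by
  have hx1 : x ∈ Ioo 0 1 := ⟨hx.1, by linarith [hx.2]⟩
  have hc : 0 < negMulLog x := negMulLog_pos hx1
  have hle : negMulLog x ≤ 4 * negMulLog y := by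
    simpa using rpow_div_mul_negMulLog_le (θ := 0) (by norm_num) hx.1 hx.2 hy
  have sqrt_four : (4 : ℝ) ^ (1 / 2 : ℝ) = 2 := by norm_num
  calc incrementDensity φ t h x ≤ (4 * negMulLog y) ^ (1 / 2 : ℝ) * M ^ 2 := by
        rw [incrementDensity_eq φ t h hx1]
        gcongr
        · exact rpow_nonneg (hc.le.trans hle) _
        · exact hM _ _
    _ = 2 * M ^ 2 * negMulLog y ^ (1 / 2 : ℝ) := by
        rw [mul_rpow four_pos.le (by linarith), sqrt_four]; ring

lemma incrementDensity_le_of_lipschitz (hφ : LipschitzWith K φ) (t h : ℝ) {x : ℝ}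
    (hx : x ∈ Ioo 0 1) :
    incrementDensity φ t h x ≤ (K * h) ^ 2 * negMulLog x ^ (-(5 / 2) : ℝ) := by
  have hc : 0 < negMulLog x := negMulLog_pos hx
  have hlip : |φ ((t + h) * criticalWeight x) - φ (t * criticalWeight x)| ≤
      K * |h * criticalWeight x| := by
    have := hφ.dist_le_mul ((t + h) * criticalWeight x) (t * criticalWeight x)
    rwa [dist_eq, dist_eq, ← sub_mul, add_sub_cancel_left] at this
  have pow_eq : negMulLog x ^ (-(5 / 2) : ℝ) =
      negMulLog x ^ (1 / 2 : ℝ) * criticalWeight x ^ 2 := by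
    rw [criticalWeight, ← rpow_natCast, ← rpow_mul hc.le, ← rpow_add hc]; norm_num
  calc incrementDensity φ t h x
      ≤ negMulLog x ^ (1 / 2 : ℝ) * (K * |h * criticalWeight x|) ^ 2 := by
        rw [incrementDensity_eq φ t h hx]
        gcongr
    _ = (K * h) ^ 2 * negMulLog x ^ (-(5 / 2) : ℝ) := by
        rw [mul_pow, sq_abs, pow_eq]; ring

lemma incrementDensity_le_of_lipschitz_of_radius (hφ : LipschitzWith K φ) (t h : ℝ) {x y : ℝ}
    (hy : 0 < y) (hyx : y ≤ x) (hx : x ≤ 1 / 2) :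
    incrementDensity φ t h x ≤
      (K * h) ^ 2 * (32 * negMulLog y ^ (-(5 / 2) : ℝ)) * (x / y) ^ (-(5 / 4) : ℝ) := by
  have hpow := negMulLog_rpow_neg_le (r := 5 / 2) (by norm_num) hy hyx hx
  rw [show (4 : ℝ) ^ (5 / 2 : ℝ) = 32 by norm_num,
    show (5 / 2 / 2 : ℝ) = 5 / 4 by norm_num] at hpow
  calc incrementDensity φ t h x ≤ (K * h) ^ 2 * negMulLog x ^ (-(5 / 2) : ℝ) :=
        incrementDensity_le_of_lipschitz hφ t h ⟨hy.trans_le hyx, by linarith⟩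
    _ ≤ (K * h) ^ 2 * (32 * negMulLog y ^ (-(5 / 2) : ℝ)) * (x / y) ^ (-(5 / 4) : ℝ) := by
        rw [mul_assoc]
        gcongr

lemma integrableOn_incrementDensity (hφ : Measurable φ) (hM : ∀ a b, |φ a - φ b| ≤ M) (t h : ℝ) :
    IntegrableOn (incrementDensity φ t h) (Ioc 0 (1 / 2)) := by
  have hmeas : Measurable (incrementDensity φ t h) := by
    have hsection : Measurable fun x : ℝ => ((t, h), x) := measurable_prodMk_left
    simpa only [Function.comp_def] using (measurable_incrementDensity hφ).comp hsection
  refine Measure.integrableOn_of_bounded measure_Ioc_lt_top.ne hmeas.aestronglyMeasurable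
    (M := 2 * M ^ 2 * negMulLog (1 / 2) ^ (1 / 2 : ℝ)) ?_
  filter_upwards [ae_restrict_mem measurableSet_Ioc] with x hx
  rw [norm_of_nonneg (incrementDensity_nonneg φ t h ⟨hx.1, hx.2.trans_lt one_half_lt_one⟩)]
  exact incrementDensity_le_of_bounded hM t h hx le_rfl

lemma setIntegral_incrementDensity_Ioc_le (hφ : Measurable φ) (hM : ∀ a b, |φ a - φ b| ≤ M)
    (t h : ℝ) {y : ℝ} (hy : y ∈ Ioc 0 (1 / 2)) :
    ∫ x in Ioc 0 y, incrementDensity φ t h x ≤ y * (2 * M ^ 2 * negMulLog y ^ (1 / 2 : ℝ)) := by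
  calc ∫ x in Ioc 0 y, incrementDensity φ t h x
      ≤ ∫ _ in Ioc 0 y, 2 * M ^ 2 * negMulLog y ^ (1 / 2 : ℝ) :=
        setIntegral_mono_on
          ((integrableOn_incrementDensity hφ hM t h).mono_set (Ioc_subset_Ioc_right hy.2))
          (integrableOn_const measure_Ioc_lt_top.ne) measurableSet_Ioc
          fun x hx => incrementDensity_le_of_bounded hM t h hx hy.2
    _ = y * (2 * M ^ 2 * negMulLog y ^ (1 / 2 : ℝ)) := by
        rw [setIntegral_const, volume_real_Ioc_of_le hy.1.le, sub_zero, smul_eq_mul]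

lemma setIntegral_incrementDensity_Ioo_le (hφ : LipschitzWith K φ)
    (hM : ∀ a b, |φ a - φ b| ≤ M) (t h : ℝ) {y : ℝ} (hy : y ∈ Ioo 0 (1 / 2)) :
    ∫ x in Ioo y (1 / 2), incrementDensity φ t h x ≤
      y * (128 * (K * h) ^ 2 * negMulLog y ^ (-(5 / 2) : ℝ)) := by
  have hy0 : 0 < y := hy.1
  have hc : 0 < negMulLog y := negMulLog_pos ⟨hy0, hy.2.trans one_half_lt_one⟩
  have exponent_lt : (-(5 / 4) : ℝ) < -1 := by norm_num
  have radial_nonneg : 0 ≤ᵐ[volume.restrict (Ioi y)] fun x => (x / y) ^ (-(5 / 4) : ℝ) := by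
    filter_upwards [ae_restrict_mem measurableSet_Ioi] with x hx
    exact rpow_nonneg (div_nonneg (hy0.le.trans (le_of_lt hx)) hy0.le) _
  calc ∫ x in Ioo y (1 / 2), incrementDensity φ t h x
      ≤ ∫ x in Ioo y (1 / 2),
          (K * h) ^ 2 * (32 * negMulLog y ^ (-(5 / 2) : ℝ)) * (x / y) ^ (-(5 / 4) : ℝ) :=
        setIntegral_mono_on
          ((integrableOn_incrementDensity hφ.continuous.measurable hM t h).mono_set
            fun x hx => ⟨hy0.trans hx.1, hx.2.le⟩)
          (((integrableOn_Ioi_div_rpow exponent_lt hy0).mono_set Ioo_subset_Ioi_self).const_mul _)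
          measurableSet_Ioo
          fun x hx => incrementDensity_le_of_lipschitz_of_radius hφ t h hy0 hx.1.le hx.2.le
    _ ≤ (K * h) ^ 2 * (32 * negMulLog y ^ (-(5 / 2) : ℝ)) *
          ∫ x in Ioi y, (x / y) ^ (-(5 / 4) : ℝ) := by
        rw [integral_const_mul]
        refine mul_le_mul_of_nonneg_left ?_ (by positivity)
        exact setIntegral_mono_set (integrableOn_Ioi_div_rpow exponent_lt hy0) radial_nonneg
          Ioo_subset_Ioi_self.eventuallyLE
    _ = y * (128 * (K * h) ^ 2 * negMulLog y ^ (-(5 / 2) : ℝ)) := by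
        rw [integral_Ioi_div_rpow exponent_lt hy0]; ring

lemma incrementEnergy_le_of_radius (hφ : LipschitzWith K φ) (hM : ∀ a b, |φ a - φ b| ≤ M)
    (t h : ℝ) {y : ℝ} (hy : y ∈ Ioo 0 (1 / 2)) :
    incrementEnergy φ t h ≤ y * (2 * M ^ 2 * negMulLog y ^ (1 / 2 : ℝ)) +
      y * (128 * (K * h) ^ 2 * negMulLog y ^ (-(5 / 2) : ℝ)) := by
  have hmeas : Measurable φ := hφ.continuous.measurable
  have hint := integrableOn_incrementDensity hmeas hM t h
  rw [incrementEnergy, ← Ioc_union_Ioo_eq_Ioo hy.1.le hy.2,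
    setIntegral_union (disjoint_left.2 fun x hx hx' => hx.2.not_gt hx'.1) measurableSet_Ioo
      (hint.mono_set (Ioc_subset_Ioc_right hy.2.le))
      (hint.mono_set fun x hx => ⟨hy.1.trans hx.1, hx.2.le⟩)]
  exact add_le_add (setIntegral_incrementDensity_Ioc_le hmeas hM t h ⟨hy.1, hy.2.le⟩)
    (setIntegral_incrementDensity_Ioo_le hφ hM t h hy)

lemma incrementEnergy_le_const (hφ : Measurable φ) (hM : ∀ a b, |φ a - φ b| ≤ M) (t h : ℝ) :
    incrementEnergy φ t h ≤ 1 / 2 * (2 * M ^ 2 * negMulLog (1 / 2) ^ (1 / 2 : ℝ)) := by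
  rw [incrementEnergy, ← integral_Ioc_eq_integral_Ioo]
  exact setIntegral_incrementDensity_Ioc_le hφ hM t h ⟨one_half_pos, le_rfl⟩

/-- The radius at which `x log (1/x)` is of order `h ^ (2/3)`, i.e. `h * w x` is of order one. -/
noncomputable def criticalRadius (h : ℝ) : ℝ := h ^ (2 / 3 : ℝ) / -log h

lemma criticalRadius_mem_Ioo {h : ℝ} (hh : h ∈ Ioc 0 (1 / 4)) :
    criticalRadius h ∈ Ioo 0 (1 / 2) := by
  have hL : 1 ≤ -log h := one_le_neg_log hh
  have hpow : 0 < h ^ (2 / 3 : ℝ) := rpow_pos_of_pos hh.1 _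
  refine ⟨div_pos hpow (by linarith), ?_⟩
  calc criticalRadius h ≤ h ^ (2 / 3 : ℝ) := div_le_self hpow.le hL
    _ ≤ (1 / 4) ^ (2 / 3 : ℝ) := by gcongr; exacts [hh.1.le, hh.2]
    _ < (1 / 4) ^ (1 / 2 : ℝ) :=
        rpow_lt_rpow_of_exponent_gt (by norm_num) (by norm_num) (by norm_num)
    _ = 1 / 2 := by norm_num

lemma negMulLog_criticalRadius_mem_Icc {h : ℝ} (hh : h ∈ Ioc 0 (1 / 4)) :
    negMulLog (criticalRadius h) ∈ Icc (1 / 4 * h ^ (2 / 3 : ℝ)) (4 * h ^ (2 / 3 : ℝ)) := by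
  have hpow : 0 < h ^ (2 / 3 : ℝ) := rpow_pos_of_pos hh.1 _
  refine Icc_subset_Icc ?_ ?_
    (negMulLog_rpow_div_neg_log_mem_Icc (2 / 3) hh.1 (one_le_neg_log hh)) <;> linarith

lemma negMulLog_criticalRadius_rpow_half_le {h : ℝ} (hh : h ∈ Ioc 0 (1 / 4)) :
    negMulLog (criticalRadius h) ^ (1 / 2 : ℝ) ≤ 2 * h ^ (1 / 3 : ℝ) := by
  have hpow : 0 < h ^ (2 / 3 : ℝ) := rpow_pos_of_pos hh.1 _
  obtain ⟨hlow, hupp⟩ := negMulLog_criticalRadius_mem_Icc hh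
  calc negMulLog (criticalRadius h) ^ (1 / 2 : ℝ) ≤ (4 * h ^ (2 / 3 : ℝ)) ^ (1 / 2 : ℝ) :=
        rpow_le_rpow (by linarith) hupp (by norm_num)
    _ = 2 * h ^ (1 / 3 : ℝ) := by
        rw [mul_rpow four_pos.le hpow.le, ← rpow_mul hh.1.le]; norm_num

lemma negMulLog_criticalRadius_rpow_neg_le {h : ℝ} (hh : h ∈ Ioc 0 (1 / 4)) :
    negMulLog (criticalRadius h) ^ (-(5 / 2) : ℝ) ≤ 32 * h ^ (-(5 / 3) : ℝ) := by
  have hpow : 0 < h ^ (2 / 3 : ℝ) := rpow_pos_of_pos hh.1 _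
  calc negMulLog (criticalRadius h) ^ (-(5 / 2) : ℝ)
      ≤ (1 / 4 * h ^ (2 / 3 : ℝ)) ^ (-(5 / 2) : ℝ) :=
        rpow_le_rpow_of_nonpos (by positivity) (negMulLog_criticalRadius_mem_Icc hh).1
          (by norm_num)
    _ = 32 * h ^ (-(5 / 3) : ℝ) := by
        rw [mul_rpow (by norm_num) hpow.le, ← rpow_mul hh.1.le]; norm_num

lemma incrementEnergy_le (hφ : LipschitzWith K φ) (hM : ∀ a b, |φ a - φ b| ≤ M) (t : ℝ) {h : ℝ}
    (hh : h ∈ Ioc 0 (1 / 4)) :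
    incrementEnergy φ t h ≤ (4 * M ^ 2 + 4096 * K ^ 2) * (h / -log h) := by
  have h0 : 0 < h := hh.1
  have hy : criticalRadius h ∈ Ioo 0 (1 / 2) := criticalRadius_mem_Ioo hh
  have hy0 : 0 ≤ criticalRadius h := hy.1.le
  have bounded_exponents : h ^ (2 / 3 : ℝ) * h ^ (1 / 3 : ℝ) = h := by
    rw [← rpow_add h0]; norm_num
  have lipschitz_exponents : h ^ (2 / 3 : ℝ) * (h ^ 2 * h ^ (-(5 / 3) : ℝ)) = h := by
    rw [← rpow_natCast, ← rpow_add h0, ← rpow_add h0]; norm_num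
  calc incrementEnergy φ t h
      ≤ criticalRadius h * (2 * M ^ 2 * negMulLog (criticalRadius h) ^ (1 / 2 : ℝ)) +
          criticalRadius h * (128 * (K * h) ^ 2 * negMulLog (criticalRadius h) ^ (-(5 / 2) : ℝ)) :=
        incrementEnergy_le_of_radius hφ hM t h hy
    _ ≤ criticalRadius h * (2 * M ^ 2 * (2 * h ^ (1 / 3 : ℝ))) +
          criticalRadius h * (128 * (K * h) ^ 2 * (32 * h ^ (-(5 / 3) : ℝ))) := by
        gcongr
        exacts [negMulLog_criticalRadius_rpow_half_le hh, negMulLog_criticalRadius_rpow_neg_le hh]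
    _ = 4 * M ^ 2 * (h ^ (2 / 3 : ℝ) * h ^ (1 / 3 : ℝ) / -log h) +
          4096 * K ^ 2 * (h ^ (2 / 3 : ℝ) * (h ^ 2 * h ^ (-(5 / 3) : ℝ)) / -log h) := by
        rw [criticalRadius]; ring
    _ = (4 * M ^ 2 + 4096 * K ^ 2) * (h / -log h) := by
        rw [bounded_exponents, lipschitz_exponents]; ring

lemma abs_sin_sub_sin_le_two (a b : ℝ) : |sin a - sin b| ≤ 2 := by
  rw [abs_le]
  constructor <;> linarith [sin_le_one a, sin_le_one b, neg_one_le_sin a, neg_one_le_sin b]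

theorem critical_counterexample_besov_regularity_general (hφ : LipschitzWith K φ)
    (hM : ∀ a b, |φ a - φ b| ≤ M) (c w : ℝ → ℝ) (u : ℝ → ℝ → ℝ)
    (hc : ∀ x, c x = x * log (1 / x))
    (hw : ∀ x, w x = (x * log (1 / x)) ^ (-(3 / 2 : ℝ)))
    (hu : ∀ t x, u t x = c x * φ (t * w x))
    (T p q : ℝ) (hp : 0 < p) (hq : 2 < q) :
    IntegrableOn
      (fun h : ℝ =>
        (∫ t in Ioo (0:ℝ) (T - h),
            (∫ x in Ioo (0:ℝ) (1 / 2), |u (t + h) x - u t x| ^ 2 * w x) ^ (p / 2)) ^ (q / p) *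
          h ^ (-1 - q / 2))
      (Ioi 0) := by
  have hw' : w = criticalWeight := funext fun x => by rw [hw, mul_log_one_div, criticalWeight]
  have hu' : u = criticalOscillation φ :=
    funext₂ fun t x => by rw [hu, hc, hw', mul_log_one_div, criticalOscillation]
  have hmeas : Measurable φ := hφ.continuous.measurable
  have hbesov : IntegrableOn (besovIntegrand (incrementEnergy φ) T (1 / 2) p q) (Ioi 0) :=
    integrableOn_besovIntegrand_of_log_gain (A := 4 * M ^ 2 + 4096 * K ^ 2) (h₀ := 1 / 4)
      one_half_pos hp hq (by norm_num) (measurable_incrementEnergy hmeas)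
      (incrementEnergy_nonneg φ) (by positivity)
      (fun h hh t => by simpa using incrementEnergy_le hφ hM t hh)
      (incrementEnergy_le_const hmeas hM)
  unfold besovIntegrand incrementEnergy incrementDensity at hbesov
  simpa only [hu', hw', mul_one_div] using hbesov

end CriticalOscillation

/-- The function `t ↦ u(t,·)`, with `u(t,x) = c(x)(sin(t w(x)) + d)`, `c(x) = x log(1/x)`
and weight `w(x) = (x log(1/x))^{-3/2}`, belongs to the homogeneous Besov space
`B^{1/2,p}_q([0,T]; L²((0,1/2), w dx))` for every `p ∈ [1,∞)` and `q ∈ (2,∞)`: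
the Besov integral
`∫₀ᵀ (∫₀^{T-h} (∫₀^{1/2} |u(t+h,x) − u(t,x)|² w(x) dx)^{p/2} dt)^{q/p} h^{-1-q/2} dh`
is finite. -/
theorem critical_counterexample_besov_regularity
    (d : ℝ) (c w : ℝ → ℝ) (u : ℝ → ℝ → ℝ)
    (hc : ∀ x, c x = x * Real.log (1 / x))
    (hw : ∀ x, w x = (x * Real.log (1 / x)) ^ (-(3 / 2 : ℝ)))
    (hu : ∀ t x, u t x = c x * (Real.sin (t * w x) + d))
    (T : ℝ) (hT : T ∈ Ioc (0:ℝ) (1 / 4))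
    (p q : ℝ) (hp : 1 ≤ p) (hq : 2 < q) :
    IntegrableOn
      (fun h : ℝ =>
        (∫ t in Ioo (0:ℝ) (T - h),
            (∫ x in Ioo (0:ℝ) (1 / 2), |u (t + h) x - u t x| ^ 2 * w x) ^ (p / 2)) ^ (q / p) *
          h ^ (-1 - q / 2))
      (Ioo (0:ℝ) T) := by
  exact (critical_counterexample_besov_regularity_general (φ := fun r => Real.sin r + d)
    (by simpa using Real.lipschitzWith_sin.add (LipschitzWith.const d))
    (fun a b => by simpa using abs_sin_sub_sin_le_two a b)
    c w u hc hw hu T p q (by linarith) hq).mono_set Ioo_subset_Ioi_self
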